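/- arXiv:2203.14687 — 2 statements merged into one kernel-verified Lean document; each statement's English description precedes it below -/
import Mathlib

section
/- Let q = p^h be a prime power and let f(X,Y) = Σ_{i,j} a_{i,j} X^i Y^j ∈ F_q[X,Y] have total degree d ≥ 1 and a_{0,0} = 0. Let j̄ = max{ j : a_{i,j} ≠ 0 for some i }. If j̄ > 1, then the hypersurface S_f contains an absolutely irreducible component defined over F_q; that is, there is a nonconstant polynomial g ∈ F_q[X_0,X_1,X_2,X_3,X_4] dividing F that remains irreducible over the algebraic closure of F_q. -/
open MvPolynomial

/-- The coefficient `a_{i,j}` of the monomial `X^i Y^j` in `f ∈ F_q[X,Y]`. -/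
noncomputable def coeffXY {K : Type*} [Field K] (f : MvPolynomial (Fin 2) K) (i j : ℕ) : K :=
  f.coeff (Finsupp.single (0 : Fin 2) i + Finsupp.single (1 : Fin 2) j)

/-- The homogeneous polynomial
`F = (X₂ − X₄)² X₀^{d−1} + (X₁ − X₃)·Σ_{i,j} a_{i,j}(X₁^i X₂^j − X₃^i X₄^j) X₀^{d−i−j}`
defining the hypersurface `S_f ⊂ PG(4,q)`. -/
noncomputable def Fpoly {K : Type*} [Field K] (f : MvPolynomial (Fin 2) K) (d : ℕ) :
    MvPolynomial (Fin 5) K :=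
  (X 2 - X 4) ^ 2 * (X 0) ^ (d - 1)
    + (X 1 - X 3) *
      ∑ m ∈ f.support,
        C (f.coeff m) *
          ((X 1) ^ (m 0) * (X 2) ^ (m 1) - (X 3) ^ (m 0) * (X 4) ^ (m 1))
          * (X 0) ^ (d - m 0 - m 1)

/-- `S_f` contains an absolutely irreducible component defined over the base field: there is a
nonconstant polynomial `g` over the base field dividing `F` that remains irreducible over the
algebraic closure. -/
def HasAbsIrrComponent {K : Type*} [Field K] (F : MvPolynomial (Fin 5) K) : Prop :=
  ∃ g : MvPolynomial (Fin 5) K, g ∣ F ∧ 0 < g.totalDegree ∧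
    Irreducible (MvPolynomial.map (algebraMap K (AlgebraicClosure K)) g)

/-!
Restrict `F` to the curves `X₀ = 1, X₁ = x t, X₂ = t ^ N, X₃ = t, X₄ = 0` with `N` large and take
the leading coefficient in `t`. This is a multiplicative map to polynomials in `x`, and as `j̄ > 1`
it sends `F` to `a (x - 1) x ^ i`, with `a = a_{i,j̄}` for the largest possible `i`. Since `x - 1`
occurs exactly once, it occurs in the image of exactly one irreducible factor of `F`, both over the
base field and over its algebraic closure. The latter factor `Q` is therefore stable under all
automorphisms, so a power of it is defined over the base field, and the former is a power of `Q`;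
as it is divisible by `Q` only once, it is `Q`.
-/

section PrimeImage

variable {A B : Type*} [CommMonoidWithZero A] [CommMonoidWithZero B]

theorem exists_irreducible_dvd_of_prime_dvd_map [WfDvdMonoid A] (τ : A →* B) {π : B} (hπ : Prime π)
    {a : A} (ha : a ≠ 0) (h : π ∣ τ a) : ∃ p, Irreducible p ∧ p ∣ a ∧ π ∣ τ p := by
  obtain ⟨s, hs, hsa⟩ := WfDvdMonoid.exists_factors a ha
  have hdvd : π ∣ (s.map τ).prod := by
    rw [← map_multiset_prod]
    exact h.trans (hsa.map τ).symm.dvd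
  obtain ⟨b, hb, hπb⟩ := hπ.exists_mem_multiset_dvd hdvd
  obtain ⟨p, hp, rfl⟩ := Multiset.mem_map.1 hb
  exact ⟨p, hs p hp, (Multiset.dvd_prod hp).trans hsa.dvd, hπb⟩

theorem associated_of_dvd_map_of_not_sq_dvd [DecompositionMonoid A] (τ : A →* B) {π : B}
    {a p q : A} (h : ¬ π ^ 2 ∣ τ a) (hp : Irreducible p) (hq : Irreducible q) (hpa : p ∣ a)
    (hqa : q ∣ a) (hπp : π ∣ τ p) (hπq : π ∣ τ q) : Associated p q := by
  by_contra hne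
  have hpq : p * q ∣ a :=
    (hp.isRelPrime_iff_not_dvd.2 fun hdvd => hne (hp.associated_of_dvd hq hdvd)).mul_dvd hpa hqa
  refine h ?_
  calc π ^ 2 = π * π := sq π
    _ ∣ τ p * τ q := mul_dvd_mul hπp hπq
    _ = τ (p * q) := (map_mul τ p q).symm
    _ ∣ τ a := map_dvd τ hpq

theorem associated_of_dvd_of_not_sq_dvd_of_dvd_pow [IsCancelMulZero A] {a p : A} {n : ℕ}
    (hp : Prime p) (hpa : p ∣ a) (hsq : ¬ p ^ 2 ∣ a) (han : a ∣ p ^ n) : Associated a p := by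
  obtain ⟨j, -, haj⟩ := (dvd_prime_pow hp n).1 han
  have hj0 : j ≠ 0 := by
    rintro rfl
    exact hp.not_isUnit (isUnit_of_dvd_one ((pow_zero p) ▸ hpa.trans haj.dvd))
  have hj2 : j < 2 := by
    by_contra! hj
    exact hsq ((pow_dvd_pow p hj).trans haj.symm.dvd)
  obtain rfl : j = 1 := by lia
  rwa [pow_one] at haj

end PrimeImage

section GaloisConjugates

theorem algEquiv_comp_algebraMap {R A : Type*} [CommSemiring R] [Semiring A] [Algebra R A]
    (s : A ≃ₐ[R] A) : (s : A →+* A).comp (algebraMap R A) = algebraMap R A :=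
  RingHom.ext s.commutes

theorem map_algEquiv_map_algebraMap {σ R A : Type*} [CommSemiring R] [CommSemiring A]
    [Algebra R A] (s : A ≃ₐ[R] A) (P : MvPolynomial σ R) :
    map (s : A →+* A) (map (algebraMap R A) P) = map (algebraMap R A) P := by
  rw [map_map, algEquiv_comp_algebraMap]

variable {σ K L : Type*} [Field K] [Field L] [Algebra K L]

theorem exists_associated_forall_map_eq {Q : MvPolynomial σ L} (hQ : Q ≠ 0)
    (h : ∀ s : Gal(L/K), Associated Q (map (s : L →+* L) Q)) :
    ∃ N, Associated Q N ∧ ∀ s : Gal(L/K), map (s : L →+* L) N = N := by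
  obtain ⟨m, hm⟩ := ne_zero_iff.1 hQ
  have hu : IsUnit (C (coeff m Q)⁻¹ : MvPolynomial σ L) :=
    (IsUnit.mk0 _ (inv_ne_zero hm)).map C
  obtain ⟨N, hN⟩ : ∃ N, N = C (coeff m Q)⁻¹ * Q := ⟨_, rfl⟩
  have hQN : Associated Q N := ⟨hu.unit, by rw [hN, mul_comm, hu.unit_spec]⟩
  have hNm : coeff m N = 1 := by rw [hN, coeff_C_mul, inv_mul_cancel₀ hm]
  refine ⟨N, hQN, fun s => ?_⟩
  obtain ⟨u, hu⟩ := hQN.symm.trans ((h s).trans (hQN.map (map (s : L →+* L))))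
  obtain ⟨r, -, hr⟩ := isUnit_iff_eq_C_of_isReduced.1 u.isUnit
  have hr1 : r = 1 := by
    have := congrArg (coeff m) hu
    rwa [hr, mul_comm, coeff_C_mul, coeff_map, hNm, mul_one, map_one] at this
  rw [← hu, hr, hr1, C_1, mul_one]

theorem mem_perfectClosure_of_forall_algEquiv_eq [Normal K L] {x : L}
    (h : ∀ s : Gal(L/K), s x = x) : x ∈ perfectClosure K L := by
  classical
  have hx : IsIntegral K x := Normal.isIntegral inferInstance x
  have hroots : ((minpoly K x).aroots L).toFinset = {x} := by
    ext y
    rw [Multiset.mem_toFinset, ← isConjRoot_iff_mem_minpoly_aroots hx, Finset.mem_singleton]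
    refine ⟨fun hxy => ?_, fun hyx => hyx ▸ IsConjRoot.refl⟩
    obtain ⟨s, rfl⟩ := isConjRoot_iff_exists_algEquiv.1 hxy.symm
    exact h s
  rw [mem_perfectClosure_iff_natSepDegree_eq_one,
    Polynomial.natSepDegree_eq_of_splits _ (Normal.splits inferInstance x), hroots,
    Finset.card_singleton]

theorem exists_pow_mem_range_map_of_forall_map_eq [Normal K L] {P : MvPolynomial σ L}
    (h : ∀ s : Gal(L/K), map (s : L →+* L) P = P) :
    ∃ k ≠ 0, P ^ k ∈ (map (σ := σ) (algebraMap K L)).range := by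
  let p := ringExpChar K
  have : ExpChar L p := expChar_of_injective_algebraMap (algebraMap K L).injective p
  have hcoeff (m : σ →₀ ℕ) : ∃ n : ℕ, coeff m P ^ p ^ n ∈ (algebraMap K L).range :=
    mem_perfectClosure_iff.1 <| mem_perfectClosure_of_forall_algEquiv_eq fun s =>
      (coeff_map (s : L →+* L) P m).symm.trans (by rw [h s])
  choose n hn using hcoeff
  refine ⟨p ^ P.support.sup n, pow_ne_zero _ (expChar_ne_zero K p), ?_⟩
  conv => enter [2, 1]; rw [P.as_sum]
  rw [sum_pow_char_pow p]
  refine sum_mem fun m hm => ?_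
  obtain ⟨a, ha⟩ : coeff m P ^ p ^ P.support.sup n ∈ (algebraMap K L).range := by
    obtain ⟨e, he⟩ := Nat.exists_eq_add_of_le (Finset.le_sup (f := n) hm)
    rw [he, pow_add, pow_mul]
    exact pow_mem (hn m) _
  exact ⟨monomial (p ^ P.support.sup n • m) a, by
    rw [map_monomial, ha, monomial_pow]⟩

end GaloisConjugates

section AbsoluteIrreducibility

variable {σ K L B : Type*} [Field K] [Field L] [Algebra K L] [CommMonoidWithZero B]

theorem exists_irreducible_factor_forall_map_eq (τ : MvPolynomial σ L →* B) {π : B}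
    (hπ : Prime π) (hτ : ∀ (s : Gal(L/K)) Q, π ∣ τ Q → π ∣ τ (map (s : L →+* L) Q))
    {P : MvPolynomial σ K} (hP : P ≠ 0) (hdvd : π ∣ τ (map (algebraMap K L) P))
    (hsq : ¬ π ^ 2 ∣ τ (map (algebraMap K L) P)) :
    ∃ Q, Irreducible Q ∧ Q ∣ map (algebraMap K L) P ∧ π ∣ τ Q ∧
      ∀ s : Gal(L/K), map (s : L →+* L) Q = Q := by
  have hPL : map (algebraMap K L) P ≠ 0 :=
    (map_ne_zero_iff _ (map_injective _ (algebraMap K L).injective)).2 hP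
  obtain ⟨Q, hQ, hQP, hπQ⟩ := exists_irreducible_dvd_of_prime_dvd_map τ hπ hPL hdvd
  have hconj (s : Gal(L/K)) : Associated Q (map (s : L →+* L) Q) :=
    associated_of_dvd_map_of_not_sq_dvd τ hsq hQ
      ((MulEquiv.irreducible_iff (mapEquiv σ (s : L ≃+* L))).2 hQ) hQP
      (map_algEquiv_map_algebraMap s P ▸ map_dvd (map (s : L →+* L)) hQP) hπQ (hτ s Q hπQ)
  obtain ⟨N, hQN, hN⟩ := exists_associated_forall_map_eq hQ.ne_zero hconj
  exact ⟨N, hQN.irreducible hQ, hQN.symm.dvd.trans hQP, hπQ.trans (map_dvd τ hQN.dvd), hN⟩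

theorem irreducible_map_of_prime_dvd_of_not_sq_dvd [Normal K L] (τ : MvPolynomial σ L →* B) {π : B}
    (hπ : Prime π) (hτ : ∀ (s : Gal(L/K)) Q, π ∣ τ Q → π ∣ τ (map (s : L →+* L) Q))
    {P : MvPolynomial σ K} (hP : Irreducible P) (hdvd : π ∣ τ (map (algebraMap K L) P))
    (hsq : ¬ π ^ 2 ∣ τ (map (algebraMap K L) P)) :
    Irreducible (map (algebraMap K L) P) := by
  obtain ⟨Q, hQ, ⟨R, hPQR⟩, hπQ, hQfix⟩ :=
    exists_irreducible_factor_forall_map_eq τ hπ hτ hP.ne_zero hdvd hsq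
  have hsqQ : ¬ Q ^ 2 ∣ map (algebraMap K L) P := fun h =>
    hsq ((pow_dvd_pow_of_dvd hπQ 2).trans (map_pow τ Q 2 ▸ map_dvd τ h))
  have hRfix (s : Gal(L/K)) : map (s : L →+* L) R = R :=
    mul_left_cancel₀ hQ.ne_zero <| by
      rw [← hPQR, ← map_algEquiv_map_algebraMap s P, hPQR, map_mul, hQfix]
  obtain ⟨k, hk, g, hg⟩ := exists_pow_mem_range_map_of_forall_map_eq hQfix
  obtain ⟨l, hl, r, hr⟩ := exists_pow_mem_range_map_of_forall_map_eq hRfix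
  have hpow : P ^ (k * l) = g ^ l * r ^ k := by
    apply map_injective _ (algebraMap K L).injective
    rw [map_pow, hPQR, map_mul, map_pow, map_pow, hg, hr, mul_pow, ← pow_mul, ← pow_mul,
      mul_comm l k]
  have hPgr : P ∣ g ^ l * r ^ k := hpow ▸ dvd_pow_self P (mul_ne_zero hk hl)
  suffices hPQ : map (algebraMap K L) P ∣ Q ^ (k * l) from
    (associated_of_dvd_of_not_sq_dvd_of_dvd_pow hQ.prime ⟨R, hPQR⟩ hsqQ hPQ).symm.irreducible hQ
  rcases hP.prime.dvd_or_dvd hPgr with hPg | hPr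
  · simpa only [map_pow, hg, ← pow_mul] using map_dvd (map (algebraMap K L)) hPg
  · have hPR : map (algebraMap K L) P ∣ R ^ (l * k) := by
      simpa only [map_pow, hr, ← pow_mul] using map_dvd (map (algebraMap K L)) hPr
    have hQR : Q ∣ R := hQ.prime.dvd_of_dvd_pow (Dvd.dvd.trans ⟨R, hPQR⟩ hPR)
    exact (hsqQ (by rw [hPQR, sq]; exact mul_dvd_mul_left Q hQR)).elim

end AbsoluteIrreducibility

section LeadingCoeffAlong

variable {σ R B : Type*} [CommSemiring R] [CommSemiring B] [Algebra R B]

/-- Substitution of the monomial curve `X i = c i * t ^ w i` into a polynomial. -/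
noncomputable def monomialCurve (c : σ → B) (w : σ → ℕ) :
    MvPolynomial σ R →ₐ[R] Polynomial B :=
  aeval fun i => Polynomial.C (c i) * Polynomial.X ^ w i

/-- The leading coefficient, with respect to `t`, of the restriction of a polynomial to the
monomial curve `X i = c i * t ^ w i`. It is multiplicative when `B` has no zero divisors. -/
noncomputable def leadingCoeffAlong [NoZeroDivisors B] (c : σ → B) (w : σ → ℕ) :
    MvPolynomial σ R →* B :=
  Polynomial.leadingCoeffHom.comp
    ((monomialCurve c w : MvPolynomial σ R →ₐ[R] Polynomial B) : MvPolynomial σ R →* Polynomial B)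

theorem leadingCoeffAlong_apply [NoZeroDivisors B] (c : σ → B) (w : σ → ℕ) (P : MvPolynomial σ R) :
    leadingCoeffAlong c w P = (monomialCurve c w P).leadingCoeff := rfl

end LeadingCoeffAlong

section ChangeOfCoefficients

theorem leadingCoeffAlong_map {σ R S : Type*} [CommSemiring R] [NoZeroDivisors R]
    [CommSemiring S] [NoZeroDivisors S] {s : R →+* S} (hs : Function.Injective s)
    (c : σ → Polynomial R) (w : σ → ℕ) (P : MvPolynomial σ R) :
    leadingCoeffAlong (fun i => (c i).map s) w (map s P) = (leadingCoeffAlong c w P).map s := by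
  have hcurve : ((monomialCurve (fun i => (c i).map s) w : MvPolynomial σ S →ₐ[S] _) :
      MvPolynomial σ S →+* Polynomial (Polynomial S)).comp (map s) =
      (Polynomial.mapRingHom (Polynomial.mapRingHom s)).comp
        (monomialCurve c w : MvPolynomial σ R →ₐ[R] _) :=
    MvPolynomial.ringHom_ext (fun a => by simp [monomialCurve, Polynomial.algebraMap_apply])
      fun i => by simp [monomialCurve]
  rw [leadingCoeffAlong_apply, leadingCoeffAlong_apply, ← Polynomial.coe_mapRingHom,
    ← Polynomial.leadingCoeff_map_of_injective (Polynomial.map_injective s hs)]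
  exact congrArg Polynomial.leadingCoeff (RingHom.congr_fun hcurve P)

theorem exists_irreducible_dvd_irreducible_map {σ K : Type*} (L : Type*) [Field K] [Field L]
    [Algebra K L] [Normal K L] (c : σ → Polynomial K) (w : σ → ℕ) {F : MvPolynomial σ K} {x : K}
    (hdvd : Polynomial.X - Polynomial.C x ∣ leadingCoeffAlong c w F)
    (hsq : ¬ (Polynomial.X - Polynomial.C x) ^ 2 ∣ leadingCoeffAlong c w F) :
    ∃ P, Irreducible P ∧ P ∣ F ∧ Irreducible (map (algebraMap K L) P) := by
  have hF : F ≠ 0 := by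
    rintro rfl
    rw [leadingCoeffAlong_apply, map_zero, Polynomial.leadingCoeff_zero] at hsq
    exact hsq (dvd_zero _)
  obtain ⟨P, hP, hPF, hxP⟩ :=
    exists_irreducible_dvd_of_prime_dvd_map _ (Polynomial.prime_X_sub_C x) hF hdvd
  let ι : K →+* L := algebraMap K L
  let τ : MvPolynomial σ L →* Polynomial L := leadingCoeffAlong (fun i => (c i).map ι) w
  have hτP : τ (map ι P) = (leadingCoeffAlong c w P).map ι :=
    leadingCoeffAlong_map ι.injective c w P
  have hιx : Polynomial.X - Polynomial.C (ι x) = (Polynomial.X - Polynomial.C x).map ι := by simp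
  have hconj (s : Gal(L/K)) (Q : MvPolynomial σ L) :
      τ (map (s : L →+* L) Q) = (τ Q).map (s : L →+* L) := by
    rw [← leadingCoeffAlong_map (s : L →+* L).injective]
    simp only [Polynomial.map_map, ι, τ, algEquiv_comp_algebraMap]
  refine ⟨P, hP, hPF, irreducible_map_of_prime_dvd_of_not_sq_dvd τ
    (Polynomial.prime_X_sub_C (ι x)) (fun s Q hxQ => ?_) hP ?_ ?_⟩
  · simpa [hconj, ι] using Polynomial.map_dvd (s : L →+* L) hxQ
  · rw [hτP, hιx]
    exact Polynomial.map_dvd ι hxP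
  · rw [hτP, hιx, ← Polynomial.map_pow, Polynomial.map_dvd_map']
    exact fun h => hsq (h.trans (map_dvd _ hPF))

end ChangeOfCoefficients

theorem not_X_sub_C_sq_dvd_mul {R : Type*} [CommRing R] [IsDomain R] {x : R} {p : Polynomial R}
    (hp : p.eval x ≠ 0) :
    ¬ (Polynomial.X - Polynomial.C x) ^ 2 ∣ (Polynomial.X - Polynomial.C x) * p := by
  rwa [sq, mul_dvd_mul_iff_left (Polynomial.X_sub_C_ne_zero x), Polynomial.dvd_iff_isRoot]

theorem totalDegree_pos_of_irreducible {σ K : Type*} [Field K] {P : MvPolynomial σ K}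
    (hP : Irreducible P) : 0 < P.totalDegree := by
  refine Nat.pos_of_ne_zero fun h0 => hP.not_isUnit ?_
  obtain ⟨a, ha⟩ : ∃ a, P = C a := ⟨_, totalDegree_eq_zero_iff_eq_C.1 h0⟩
  have ha0 : a ≠ 0 := fun h => hP.ne_zero (by rw [ha, h, C_0])
  exact ha ▸ (IsUnit.mk0 a ha0).map C

theorem leadingCoeff_add_sum_C_mul_X_pow {ι R : Type*} [Semiring R] {p : Polynomial R}
    {s : Finset ι} {a : ι → R} {e : ι → ℕ} {i : ι} (hi : i ∈ s) (ha : a i ≠ 0)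
    (hp : p.degree < ((e i : ℕ) : WithBot ℕ)) (he : ∀ j ∈ s, j ≠ i → e j < e i) :
    (p + ∑ j ∈ s, Polynomial.C (a j) * Polynomial.X ^ e j).leadingCoeff = a i := by
  classical
  have hrest : (∑ j ∈ s.erase i, Polynomial.C (a j) * Polynomial.X ^ e j).degree <
      ((e i : ℕ) : WithBot ℕ) :=
    (Polynomial.degree_sum_le _ _).trans_lt <| (Finset.sup_lt_iff (WithBot.bot_lt_coe _)).2
      fun j hj => (Polynomial.degree_C_mul_X_pow_le _ _).trans_lt <| Nat.cast_lt.2 <|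
        he j (Finset.mem_of_mem_erase hj) (Finset.ne_of_mem_erase hj)
  rw [← Finset.sum_erase_add _ _ hi, ← add_assoc, Polynomial.leadingCoeff_add_of_degree_lt,
    Polynomial.leadingCoeff_C_mul_X_pow]
  rw [Polynomial.degree_C_mul_X_pow _ ha]
  exact (Polynomial.degree_add_le _ _).trans_lt (max_lt hp hrest)

theorem exists_forall_ne_weight_lt {s : Finset (Fin 2 →₀ ℕ)} {N : ℕ} (hN : ∀ m ∈ s, m 0 < N)
    (hs : ∃ m ∈ s, 1 < m 1) :
    ∃ m ∈ s, 1 < m 1 ∧ ∀ n ∈ s, n ≠ m → n 0 + N * n 1 < m 0 + N * m 1 := by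
  obtain ⟨m₀, hm₀, hm₀1⟩ := hs
  obtain ⟨m, hm, hmax⟩ := s.exists_max_image (fun n => toLex (n 1, n 0)) ⟨m₀, hm₀⟩
  simp only [Prod.Lex.toLex_le_toLex] at hmax
  refine ⟨m, hm, ?_, fun n hn hne => ?_⟩
  · have := hmax m₀ hm₀
    lia
  · rcases hmax n hn with hlt | ⟨heq, hle⟩
    · calc n 0 + N * n 1 < N * (n 1 + 1) := by linarith [hN n hn]
        _ ≤ N * m 1 := Nat.mul_le_mul_left N hlt
        _ ≤ m 0 + N * m 1 := Nat.le_add_left _ _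
    · have hne0 : n 0 ≠ m 0 := fun h0 => hne (by ext i; fin_cases i; exacts [h0, heq])
      rw [heq]
      lia

section Fpoly

variable (K : Type*) [Field K]

/-- The coefficients of the curve `X₀ = 1, X₁ = x t, X₂ = t ^ N, X₃ = t, X₄ = 0`, over the
polynomials in `x`. -/
noncomputable def fpolyCurveCoeff : Fin 5 → Polynomial K :=
  ![1, Polynomial.X, 1, 1, 0]

/-- The exponents of `t` on the curve `X₀ = 1, X₁ = x t, X₂ = t ^ N, X₃ = t, X₄ = 0`. Giving the
zero coordinate `X₄` the weight of `X₂` keeps the restriction of every summand of `F` a single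
power of `t`. -/
def fpolyCurveWeight (N : ℕ) : Fin 5 → ℕ := ![0, 1, N, 1, N]

variable {K}

theorem monomialCurve_Fpoly (f : MvPolynomial (Fin 2) K) (d N : ℕ) :
    monomialCurve (fpolyCurveCoeff K) (fpolyCurveWeight N) (Fpoly f d) =
      Polynomial.X ^ (2 * N) + ∑ m ∈ f.support,
        Polynomial.C ((Polynomial.X - Polynomial.C 1) *
          (Polynomial.C (f.coeff m) * (Polynomial.X ^ m 0 - 0 ^ m 1))) *
            Polynomial.X ^ (1 + m 0 + N * m 1) := by
  simp only [monomialCurve, Fpoly, map_add, map_mul, map_sub, map_pow, map_sum, aeval_X, aeval_C,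
    mul_pow, Polynomial.algebraMap_apply, Algebra.algebraMap_self, RingHom.id_apply,
    fpolyCurveCoeff, fpolyCurveWeight, Finset.mul_sum]
  refine congrArg₂ (· + ·) ?_ (Finset.sum_congr rfl fun m _ => ?_)
  · simp only [Fin.isValue, Matrix.cons_val, map_one, one_mul, map_zero, zero_mul, sub_zero,
      Matrix.cons_val_zero, one_pow, pow_zero, mul_one]
    ring
  · simp only [Fin.isValue, Matrix.cons_val_one, Matrix.cons_val_zero, pow_one, Matrix.cons_val,
      map_one, one_mul, one_pow, map_zero, pow_zero, mul_one]
    ring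

theorem exists_leadingCoeffAlong_Fpoly_eq {f : MvPolynomial (Fin 2) K} (d : ℕ)
    (hf : ∃ m ∈ f.support, 1 < m 1) :
    ∃ (N i : ℕ) (a : K), a ≠ 0 ∧
      leadingCoeffAlong (fpolyCurveCoeff K) (fpolyCurveWeight N) (Fpoly f d) =
        (Polynomial.X - Polynomial.C 1) * (Polynomial.C a * Polynomial.X ^ i) := by
  have hN : ∀ m ∈ f.support, m 0 < f.totalDegree + 1 := fun m hm =>
    Nat.lt_succ_of_le ((le_degreeOf_of_mem_support 0 hm).trans (degreeOf_le_totalDegree f 0))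
  obtain ⟨m, hm, hm1, hmax⟩ := exists_forall_ne_weight_lt hN hf
  have ha : f.coeff m ≠ 0 := mem_support_iff.1 hm
  refine ⟨f.totalDegree + 1, m 0, f.coeff m, ha, ?_⟩
  have hm0 : (0 : Polynomial K) ^ m 1 = 0 := zero_pow (by lia)
  rw [leadingCoeffAlong_apply, monomialCurve_Fpoly, leadingCoeff_add_sum_C_mul_X_pow hm, hm0,
    sub_zero]
  · rw [hm0, sub_zero]
    exact mul_ne_zero (Polynomial.X_sub_C_ne_zero 1)
      (mul_ne_zero (Polynomial.C_ne_zero.2 ha) (pow_ne_zero _ Polynomial.X_ne_zero))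
  · refine (Polynomial.degree_X_pow_le _).trans_lt (Nat.cast_lt.2 ?_)
    nlinarith
  · intro n hn hne
    linarith [hmax n hn hne]

end Fpoly

theorem statement2_general {K : Type*} [Field K] (f : MvPolynomial (Fin 2) K)
    (hex : ∃ i j : ℕ, 1 < j ∧ coeffXY f i j ≠ 0) :
    HasAbsIrrComponent (Fpoly f f.totalDegree) := by
  have hsupp : ∃ m ∈ f.support, 1 < m 1 := by
    obtain ⟨i, j, hj, hij⟩ := hex
    exact ⟨_, mem_support_iff.2 hij, by simpa using hj⟩
  obtain ⟨N, i, a, ha, hlead⟩ := exists_leadingCoeffAlong_Fpoly_eq f.totalDegree hsupp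
  obtain ⟨P, hP, hPF, hPirr⟩ := exists_irreducible_dvd_irreducible_map (AlgebraicClosure K)
    (fpolyCurveCoeff K) (fpolyCurveWeight N) (x := 1) (hlead ▸ dvd_mul_right _ _)
    (hlead ▸ not_X_sub_C_sq_dvd_mul (by simpa using ha))
  exact ⟨P, hPF, totalDegree_pos_of_irreducible hP, hPirr⟩

/-- If `j̄ = max{ j : a_{i,j} ≠ 0 for some i } > 1` (equivalently, some coefficient `a_{i,j}` with
`j > 1` is nonzero), then `S_f` contains an absolutely irreducible component defined over `F_q`. -/
theorem statement2 (p h q : ℕ) (hp : p.Prime) (hh : 0 < h) (hq : q = p ^ h)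
    (K : Type*) [Field K] [Fintype K] (hcard : Fintype.card K = q)
    (f : MvPolynomial (Fin 2) K) (d : ℕ) (hdeg : f.totalDegree = d) (hd : 1 ≤ d)
    (h00 : coeffXY f 0 0 = 0)
    (hex : ∃ i j : ℕ, 1 < j ∧ coeffXY f i j ≠ 0) :
    HasAbsIrrComponent (Fpoly f d) := by
  subst hdeg
  exact statement2_general f hex
end

section
/- Let q = 2^h and let f(X,Y) = Σ_{i,j} a_{i,j} X^i Y^j ∈ F_q[X,Y] have total degree d ≥ 1 and a_{0,0} = 0. If there exists a pair (i,j) ∉ {(1,0),(0,1)} with a_{i,j} ≠ 0, then the hypersurface S_f contains an absolutely irreducible component defined over F_q; that is, there is a nonconstant polynomial g ∈ F_q[X_0,X_1,X_2,X_3,X_4] dividing F that remains irreducible over the algebraic closure of F_q. -/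
open MvPolynomial

/-! Over the algebraic closure, setting `X₀ = 1` turns `F` into
`(y − w)² + (x − z)(f(x, y) − f(z, w))`. Suppose a multiplicative map `ψ` on the polynomial ring
sends `F` to an irreducible element and does not distinguish Galois conjugates. Then some
irreducible factor `g` of `F` has a nonunit image, and `g · σ(g)` never divides `F`: otherwise
`ψ(F)` would have two nonunit factors. Every conjugate of `g` also divides `F`, so it must be
associated to `g`, and after scaling `g` has coefficients in the perfect closure of the base field.
A power of `g` is then defined over the base field, and since `g` occurs in `F` with multiplicity
one, `g` itself is defined there up to a unit.

Three choices of `ψ` cover all `f = ∑ aⱼ(x) yʲ` of degree at least two. If `deg_y f ≥ 2`, put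
`w = 0`: the leading coefficient in `y` has degree one in `z`. If `f = b(x) y + a(x)` with `b`
nonconstant, put `w = y`: the slice `(x − z)(f(x, y) − f(z, y))` has degree one in `y`. If `b` is
constant, then `deg a ≥ 2`; put `w = 0` again: the slice is a monic quadratic in `y`, which has no
root in characteristic two. -/

open scoped Polynomial

theorem isUnit_map_of_forall_irreducible_dvd {α M : Type*} [CommMonoidWithZero α] [WfDvdMonoid α]
    [CommMonoid M] (ψ : α →* M) {a : α} (ha : a ≠ 0)
    (h : ∀ g, Irreducible g → g ∣ a → IsUnit (ψ g)) : IsUnit (ψ a) := by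
  induction a using WfDvdMonoid.induction_on_irreducible with
  | zero => exact absurd rfl ha
  | unit u hu => exact hu.map ψ
  | mul a i ha0 hi ih =>
    rw [map_mul]
    exact (h i hi (dvd_mul_right i a)).mul (ih ha0 fun g hg hga => h g hg (hga.mul_left i))

section Descent

variable {ι K L : Type*} [Field K] [Field L] [Algebra K L]

section
attribute [local instance] algebraMvPolynomial

theorem dvd_of_map_algebraMap_dvd {g F : MvPolynomial ι K}
    (h : map (algebraMap K L) g ∣ map (algebraMap K L) F) : g ∣ F := by
  have : Module.Free (MvPolynomial ι K) (MvPolynomial ι L) :=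
    .of_equiv (Algebra.IsPushout.equiv K (MvPolynomial ι K) L (MvPolynomial ι L)).toLinearEquiv
  rw [← Ideal.mem_span_singleton,
    ← Ideal.comap_map_eq_self_of_faithfullyFlat (B := MvPolynomial ι L) (Ideal.span {g}),
    Ideal.mem_comap, Ideal.map_span, Set.image_singleton, Ideal.mem_span_singleton]
  exact h

theorem mem_perfectClosure_of_forall_galois_fixed [Normal K L] {x : L}
    (hx : ∀ σ : Gal(L/K), σ x = x) : x ∈ perfectClosure K L := by
  classical
  have hint : IsIntegral K x := Normal.isIntegral ‹_› x
  rw [mem_perfectClosure_iff_natSepDegree_eq_one,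
    Polynomial.natSepDegree_eq_of_splits (E := L) (h := Normal.splits ‹_› x),
    Finset.card_eq_one]
  refine ⟨x, ?_⟩
  ext y
  rw [Multiset.mem_toFinset, Polynomial.mem_aroots, Finset.mem_singleton]
  constructor
  · rintro ⟨-, hy⟩
    obtain ⟨σ, rfl⟩ := minpoly.exists_algEquiv_of_root' hint.isAlgebraic hy
    exact hx σ
  · rintro rfl
    exact ⟨minpoly.ne_zero hint, minpoly.aeval K y⟩

theorem exists_map_eq_pow_of_galois_fixed [Normal K L] {g : MvPolynomial ι L}
    (hg : ∀ σ : Gal(L/K), map (σ : L →+* L) g = g) :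
    ∃ N ≠ 0, ∃ G : MvPolynomial ι K, map (algebraMap K L) G = g ^ N := by
  let p := ringExpChar K
  have : ExpChar L p := expChar_of_injective_algebraMap (algebraMap K L).injective p
  have hmem : g ∈ Subalgebra.perfectClosure (MvPolynomial ι K) (MvPolynomial ι L) p := by
    have hC (m : ι →₀ ℕ) : C (coeff m g) ∈
        Subalgebra.perfectClosure (MvPolynomial ι K) (MvPolynomial ι L) p := by
      obtain ⟨n, a, ha⟩ := mem_perfectClosure_of_forall_galois_fixed (K := K) fun σ => by
        have hm := congrArg (coeff m) (hg σ)
        rwa [coeff_map] at hm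
      exact ⟨n, C a, by rw [algebraMap_def, map_C, ha, C_pow]⟩
    have hX (i : ι) : X i ∈
        Subalgebra.perfectClosure (MvPolynomial ι K) (MvPolynomial ι L) p :=
      ⟨0, X i, by rw [algebraMap_def, map_X, pow_zero, pow_one]⟩
    rw [g.as_sum]
    refine sum_mem fun m _ => ?_
    rw [monomial_eq]
    exact mul_mem (hC m) (prod_mem fun i _ => pow_mem (hX i) _)
  obtain ⟨n, G, hG⟩ := hmem
  exact ⟨p ^ n, (expChar_pow_pos K p n).ne', G, hG⟩
end

theorem exists_dvd_associated_map_of_map_eq_pow {F G : MvPolynomial ι K} {g : MvPolynomial ι L}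
    (hg : Prime g) {N : ℕ} (hG : map (algebraMap K L) G = g ^ N) (hN : N ≠ 0)
    (hF : g ∣ map (algebraMap K L) F) (hsq : ¬ g * g ∣ map (algebraMap K L) F) :
    ∃ h, h ∣ F ∧ Associated (map (algebraMap K L) h) g := by
  have hG0 : G ≠ 0 := by
    rintro rfl
    exact pow_ne_zero N hg.ne_zero (by rw [← hG, map_zero])
  have hGunit : ¬ IsUnit G := fun hu =>
    hg.not_isUnit ((isUnit_pow_iff hN).mp (hG ▸ hu.map (map (algebraMap K L))))
  obtain ⟨h, hirr, hhG⟩ := WfDvdMonoid.exists_irreducible_factor hGunit hG0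
  have hhF : h ∣ F := by
    have hGF : G ∣ F ^ N := dvd_of_map_algebraMap_dvd (L := L) (by
      rw [hG, map_pow]
      exact pow_dvd_pow_of_dvd hF N)
    exact hirr.prime.dvd_of_dvd_pow (hhG.trans hGF)
  obtain ⟨k, -, hk⟩ := (dvd_prime_pow hg N).mp (hG ▸ map_dvd (map (algebraMap K L)) hhG)
  refine ⟨h, hhF, ?_⟩
  have hkF : g ^ k ∣ map (algebraMap K L) F := hk.symm.dvd.trans (map_dvd _ hhF)
  have hk0 : k ≠ 0 := by
    rintro rfl
    rw [pow_zero, associated_one_iff_isUnit, isUnit_iff_dvd_one] at hk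
    exact hirr.not_isUnit (isUnit_of_dvd_one (dvd_of_map_algebraMap_dvd (by simpa using hk)))
  have hk1 : k < 2 := by
    by_contra! h2
    exact hsq (sq g ▸ (pow_dvd_pow g h2).trans hkF)
  obtain rfl : k = 1 := by omega
  simpa using hk

theorem map_galois_map_algebraMap (σ : Gal(L/K)) (p : MvPolynomial ι K) :
    map (σ : L →+* L) (map (algebraMap K L) p) = map (algebraMap K L) p := by
  rw [map_map]
  congr
  exact σ.toAlgHom.comp_algebraMap

theorem exists_unit_mul_galois_fixed {g : MvPolynomial ι L} (hg0 : g ≠ 0)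
    (hg : ∀ σ : Gal(L/K), Associated (map (σ : L →+* L) g) g) :
    ∃ c : L, c ≠ 0 ∧ ∀ σ : Gal(L/K), map (σ : L →+* L) (C c * g) = C c * g := by
  obtain ⟨m, hm⟩ := ne_zero_iff.mp hg0
  refine ⟨(coeff m g)⁻¹, inv_ne_zero hm, fun σ => ?_⟩
  obtain ⟨u, hu⟩ := (hg σ).symm
  obtain ⟨a, -, ha⟩ := isUnit_iff_eq_C_of_isReduced.mp u.isUnit
  have hmap : map (σ : L →+* L) g = C a * g := by rw [← hu, ha, mul_comm]
  have hcoeff : σ (coeff m g) = a * coeff m g := by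
    have h := congrArg (coeff m) hmap
    rwa [coeff_map, coeff_C_mul] at h
  have ha0 : a ≠ 0 := by
    rintro rfl
    exact hm (by simpa using hcoeff)
  have hscalar : σ (coeff m g)⁻¹ * a = (coeff m g)⁻¹ := by
    rw [map_inv₀, hcoeff]
    field_simp
  rw [map_mul, map_C, hmap, ← mul_assoc, ← C_mul]
  exact congrArg (C · * g) hscalar

theorem exists_dvd_associated_map_of_not_mul_conj_dvd [Normal K L] {F : MvPolynomial ι K}
    {g : MvPolynomial ι L} (hg : Irreducible g) (hF : g ∣ map (algebraMap K L) F)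
    (hconj : ∀ σ : Gal(L/K), ¬ g * map (σ : L →+* L) g ∣ map (algebraMap K L) F) :
    ∃ h, h ∣ F ∧ Associated (map (algebraMap K L) h) g := by
  have hassoc (σ : Gal(L/K)) : Associated (map (σ : L →+* L) g) g := by
    have hσg : Irreducible (map (σ : L →+* L) g) :=
      (MulEquiv.irreducible_iff (mapEquiv ι (σ : L ≃+* L))).mpr hg
    have hσF : map (σ : L →+* L) g ∣ map (algebraMap K L) F :=
      map_galois_map_algebraMap σ F ▸ map_dvd (map (σ : L →+* L)) hF
    by_contra hna
    have hrel : IsRelPrime g (map (σ : L →+* L) g) :=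
      hg.isRelPrime_iff_not_dvd.mpr fun hdvd => hna (hg.associated_of_dvd hσg hdvd).symm
    exact hconj σ (hrel.mul_dvd hF hσF)
  obtain ⟨c, hc, hfix⟩ := exists_unit_mul_galois_fixed hg.ne_zero hassoc
  have hcg : Associated (C c * g) g :=
    associated_unit_mul_left g (C c) ((IsUnit.mk0 c hc).map C)
  obtain ⟨N, hN, G, hG⟩ := exists_map_eq_pow_of_galois_fixed hfix
  have hsq : ¬ C c * g * (C c * g) ∣ map (algebraMap K L) F := by
    have hone : map ((1 : Gal(L/K)) : L →+* L) g = g := map_id g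
    rw [(hcg.mul_mul hcg).dvd_iff_dvd_left, ← congrArg (g * ·) hone]
    exact hconj 1
  obtain ⟨h, hhF, hh⟩ := exists_dvd_associated_map_of_map_eq_pow
    (hcg.prime_iff.mpr hg.prime) hG hN (hcg.dvd_iff_dvd_left.mpr hF) hsq
  exact ⟨h, hhF, hh.trans hcg⟩

theorem exists_dvd_irreducible_map_of_irreducible_image [Normal K L] {M : Type*} [CommMonoid M]
    (ψ : MvPolynomial ι L →* M)
    (hψ : ∀ (σ : Gal(L/K)) (g : MvPolynomial ι L), IsUnit (ψ (map (σ : L →+* L) g)) → IsUnit (ψ g))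
    {F : MvPolynomial ι K} (hF : Irreducible (ψ (map (algebraMap K L) F))) :
    ∃ g, g ∣ F ∧ Irreducible (map (algebraMap K L) g) := by
  have hF0 : map (algebraMap K L) F ≠ 0 := by
    intro h0
    have hsq : ψ 0 = ψ 0 * ψ 0 := by rw [← map_mul, mul_zero]
    rw [h0] at hF
    exact hF.not_isUnit ((hF.isUnit_or_isUnit hsq).elim id id)
  obtain ⟨g, hg, hgF, hψg⟩ : ∃ g, Irreducible g ∧ g ∣ map (algebraMap K L) F ∧ ¬ IsUnit (ψ g) := by
    by_contra! hunit
    exact hF.not_isUnit (isUnit_map_of_forall_irreducible_dvd ψ hF0 hunit)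
  have hconj (σ : Gal(L/K)) : ¬ g * map (σ : L →+* L) g ∣ map (algebraMap K L) F := by
    rintro ⟨r, hr⟩
    rw [hr, map_mul, map_mul, mul_assoc] at hF
    refine (hF.isUnit_or_isUnit rfl).elim hψg fun hu => hψg (hψ σ g ?_)
    exact isUnit_of_mul_isUnit_left hu
  obtain ⟨h, hhF, hh⟩ := exists_dvd_associated_map_of_not_mul_conj_dvd hg hgF hconj
  exact ⟨h, hhF, hh.irreducible_iff.mpr hg⟩

end Descent

theorem totalDegree_pos_of_irreducible_map {ι K L : Type*} [Field K] [Field L] (φ : K →+* L)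
    {g : MvPolynomial ι K} (hg : Irreducible (map φ g)) : 0 < g.totalDegree := by
  by_contra! hdeg
  rw [nonpos_iff_eq_zero, totalDegree_eq_zero_iff_eq_C] at hdeg
  rw [hdeg, map_C] at hg
  exact hg.not_isUnit ((IsUnit.mk0 _ fun h0 => hg.ne_zero (by rw [h0, C_0])).map C)

section Polynomial

theorem irreducible_ofAdd_one : Irreducible (Multiplicative.ofAdd (1 : WithBot ℕ)) where
  not_isUnit h := by
    obtain ⟨n, hn⟩ := h.exists_right_inv
    have hsum : (1 : WithBot ℕ) + n.toAdd = 0 := hn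
    exact one_ne_zero (Nat.WithBot.add_eq_zero_iff.mp hsum).1
  isUnit_or_isUnit m n h := by
    have hsum : m.toAdd + n.toAdd = 1 := h.symm
    obtain ⟨hm, -⟩ | ⟨-, hn⟩ := Nat.WithBot.add_eq_one_iff.mp hsum
    · exact .inl (toAdd_eq_zero.mp hm ▸ isUnit_one)
    · exact .inr (toAdd_eq_zero.mp hn ▸ isUnit_one)

theorem irreducible_degreeMonoidHom {R : Type*} [Semiring R] [NoZeroDivisors R] [Nontrivial R]
    {p : R[X]} (hp : p.degree = 1) : Irreducible (Polynomial.degreeMonoidHom p) := by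
  have hval : Polynomial.degreeMonoidHom p = Multiplicative.ofAdd 1 := hp
  exact hval ▸ irreducible_ofAdd_one

theorem degreeMonoidHom_map_of_injective {R S : Type*} [Semiring R] [NoZeroDivisors R]
    [Nontrivial R] [Semiring S] [NoZeroDivisors S] [Nontrivial S] {φ : R →+* S}
    (hφ : Function.Injective φ) (p : R[X]) :
    Polynomial.degreeMonoidHom (p.map φ) = Polynomial.degreeMonoidHom p :=
  Polynomial.degree_map_eq_of_injective hφ p

theorem leadingCoeff_X_sq_add_C_mul_sub_C {R : Type*} [CommRing R] (u k : R) {P : R[X]}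
    (hP : 2 ≤ P.natDegree)
    (h : (Polynomial.X ^ 2 : R[X]).coeff P.natDegree + u * P.leadingCoeff ≠ 0) :
    (Polynomial.X ^ 2 + Polynomial.C u * (P - Polynomial.C k)).leadingCoeff =
      (Polynomial.X ^ 2 : R[X]).coeff P.natDegree + u * P.leadingCoeff := by
  have hcoeff : (Polynomial.X ^ 2 + Polynomial.C u * (P - Polynomial.C k)).coeff P.natDegree =
      (Polynomial.X ^ 2 : R[X]).coeff P.natDegree + u * P.leadingCoeff := by
    rw [Polynomial.coeff_add, Polynomial.coeff_C_mul, Polynomial.coeff_sub,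
      Polynomial.coeff_C_of_ne_zero (by omega), sub_zero, Polynomial.leadingCoeff]
  have hle : (Polynomial.X ^ 2 + Polynomial.C u * (P - Polynomial.C k)).natDegree ≤
      P.natDegree :=
    Polynomial.natDegree_add_le_of_degree_le ((Polynomial.natDegree_X_pow_le 2).trans hP)
      ((Polynomial.natDegree_C_mul_le _ _).trans Polynomial.natDegree_sub_C.le)
  rw [← hcoeff] at h ⊢
  rw [Polynomial.leadingCoeff, le_antisymm hle (Polynomial.le_natDegree_of_ne_zero h)]

theorem coeff_sq_eq_zero_of_odd {R : Type*} [CommRing R] [CharP R 2] (t : R[X]) {n : ℕ}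
    (hn : Odd n) : (t ^ 2).coeff n = 0 := by
  rw [← Polynomial.map_frobenius_expand 2, Polynomial.coeff_map,
    Polynomial.coeff_expand two_pos, if_neg hn.not_two_dvd_nat, map_zero]

theorem C_sub_map_C_ne_zero {R : Type*} [Ring R] {p : R[X]} (hp : 0 < p.natDegree) :
    Polynomial.C p - p.map Polynomial.C ≠ 0 := by
  intro h
  have hdeg : (p.map Polynomial.C : R[X][X]).natDegree = p.natDegree :=
    Polynomial.natDegree_map_eq_of_injective Polynomial.C_injective p
  rw [← sub_eq_zero.mp h, Polynomial.natDegree_C] at hdeg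
  exact hp.ne hdeg

variable {R : Type*} [CommRing R] [IsDomain R]

theorem natDegree_coeff_X_sub_C_X_mul_sq_add [CharP R 2] {t : R[X][X]} {m : ℕ}
    (hm : t.natDegree = m + 1) (b : R) :
    (((Polynomial.X - Polynomial.C Polynomial.X) *
      (t ^ 2 + Polynomial.C (Polynomial.C b) * t)).coeff (2 * m + 2)).natDegree =
        2 * t.leadingCoeff.natDegree + 1 := by
  have hodd : (t ^ 2).coeff (2 * m + 1) = 0 := coeff_sq_eq_zero_of_odd t (odd_two_mul_add_one m)
  have htop : (t ^ 2).coeff (2 * m + 2) = t.leadingCoeff ^ 2 := by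
    rw [show 2 * m + 2 = 2 * t.natDegree by omega, Polynomial.coeff_pow_mul_natDegree]
  have hvanish : t.coeff (2 * m + 2) = 0 := Polynomial.coeff_eq_zero_of_natDegree_lt (by omega)
  have hcoeff : ((Polynomial.X - Polynomial.C Polynomial.X) *
      (t ^ 2 + Polynomial.C (Polynomial.C b) * t)).coeff (2 * m + 2) =
        Polynomial.C b * t.coeff (2 * m + 1) - Polynomial.X * t.leadingCoeff ^ 2 := by
    rw [sub_mul, Polynomial.coeff_sub, Polynomial.coeff_X_mul, Polynomial.coeff_C_mul,
      Polynomial.coeff_add, Polynomial.coeff_add, Polynomial.coeff_C_mul, Polynomial.coeff_C_mul,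
      hodd, htop, hvanish, mul_zero, add_zero, zero_add]
  have hlead : t.leadingCoeff ≠ 0 :=
    Polynomial.leadingCoeff_ne_zero.mpr (Polynomial.ne_zero_of_natDegree_gt (n := m) (by omega))
  have hXlead : (Polynomial.X * t.leadingCoeff ^ 2).natDegree =
      2 * t.leadingCoeff.natDegree + 1 := by
    rw [Polynomial.natDegree_X_mul (pow_ne_zero 2 hlead), Polynomial.natDegree_pow]
  have hlower : (Polynomial.C b * t.coeff (2 * m + 1)).natDegree ≤ t.leadingCoeff.natDegree := by
    refine (Polynomial.natDegree_C_mul_le _ _).trans ?_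
    obtain rfl | hm0 := Nat.eq_zero_or_pos m
    · rw [Polynomial.leadingCoeff, hm]
    · rw [Polynomial.coeff_eq_zero_of_natDegree_lt (by omega : t.natDegree < 2 * m + 1),
        Polynomial.natDegree_zero]
      exact Nat.zero_le _
  rw [hcoeff, Polynomial.natDegree_sub_eq_right_of_natDegree_lt (by omega), hXlead]

theorem X_sub_C_X_mul_sq_add_ne [CharP R 2] {a : R[X]} (ha : 2 ≤ a.natDegree) (b : R)
    (t : R[X][X]) :
    (Polynomial.X - Polynomial.C Polynomial.X) * (t ^ 2 + Polynomial.C (Polynomial.C b) * t) ≠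
      Polynomial.C a - a.map Polynomial.C := by
  intro h
  obtain ht | hm := t.natDegree.eq_zero_or_eq_succ_pred
  · have hdeg := congrArg Polynomial.natDegree h
    rw [Polynomial.eq_C_of_natDegree_eq_zero ht, ← Polynomial.C_pow, ← Polynomial.C_mul,
      ← Polynomial.C_add, ← neg_sub (a.map _),
      Polynomial.natDegree_neg, Polynomial.natDegree_sub_C,
      Polynomial.natDegree_map_eq_of_injective Polynomial.C_injective] at hdeg
    have hle := (Polynomial.natDegree_mul_C_le (Polynomial.X - Polynomial.C Polynomial.X : R[X][X])
      (t.coeff 0 ^ 2 + Polynomial.C b * t.coeff 0)).trans_eq (Polynomial.natDegree_X_sub_C _)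
    omega
  · have hdeg := natDegree_coeff_X_sub_C_X_mul_sq_add hm b
    rw [h, Polynomial.coeff_sub, Polynomial.coeff_map, Polynomial.coeff_C_succ, zero_sub,
      Polynomial.natDegree_neg, Polynomial.natDegree_C] at hdeg
    omega

theorem irreducible_X_sq_add_C_mul [CharP R 2] {a : R[X]} (ha : 2 ≤ a.natDegree) (b : R) :
    Irreducible (Polynomial.X ^ 2 + Polynomial.C (Polynomial.C Polynomial.X - Polynomial.X) *
      (Polynomial.C (Polynomial.C (Polynomial.C b)) * Polynomial.X +
        Polynomial.C (Polynomial.C a - a.map Polynomial.C)) : R[X][X][X]) := by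
  let δ : R[X][X] := Polynomial.C Polynomial.X - Polynomial.X
  let c : R[X][X] := Polynomial.C a - a.map Polynomial.C
  have hform : (Polynomial.X ^ 2 + Polynomial.C δ *
      (Polynomial.C (Polynomial.C (Polynomial.C b)) * Polynomial.X + Polynomial.C c) :
        R[X][X][X]) = Polynomial.C 1 * Polynomial.X ^ 2 +
      Polynomial.C (δ * Polynomial.C (Polynomial.C b)) * Polynomial.X + Polynomial.C (δ * c) := by
    simp only [Polynomial.C_mul, Polynomial.C_1]
    ring
  have hmonic := Polynomial.leadingCoeff_quadratic (b := δ * Polynomial.C (Polynomial.C b))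
    (c := δ * c) one_ne_zero
  have hdeg := Polynomial.natDegree_quadratic (b := δ * Polynomial.C (Polynomial.C b))
    (c := δ * c) one_ne_zero
  rw [hform, Polynomial.Monic.irreducible_iff_roots_eq_zero_of_degree_le_three hmonic
    hdeg.ge (by omega), Multiset.eq_zero_iff_forall_notMem]
  intro r hr
  have hroot : r ^ 2 + δ * Polynomial.C (Polynomial.C b) * r + δ * c = 0 := by
    simpa using (Polynomial.mem_roots'.mp hr).2
  obtain ⟨t, rfl⟩ : (Polynomial.X - Polynomial.C Polynomial.X) ∣ r := by
    have hδ : δ.IsRoot Polynomial.X := by simp [δ]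
    have heval := congrArg (Polynomial.eval Polynomial.X) hroot
    rw [Polynomial.dvd_iff_isRoot]
    simpa [hδ.eq_zero] using heval
  refine X_sub_C_X_mul_sq_add_ne ha (-b) t
    (mul_left_cancel₀ (Polynomial.X_sub_C_ne_zero Polynomial.X) ?_)
  rw [Polynomial.C_neg, Polynomial.C_neg]
  linear_combination hroot

end Polynomial

section Slices

variable {R L : Type*} [CommRing R] [Field L]

/-- The polynomial `f(x, y)` viewed in `R[x][y]`, so that degrees in `y` and the degrees in `x` of
its coefficients become available; the variable `0` of `f` is `x` and the variable `1` is `y`. -/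
noncomputable def toBivariate (f : MvPolynomial (Fin 2) R) : R[X][X] :=
  aeval ![Polynomial.C Polynomial.X, Polynomial.X] f

theorem coeff_coeff_toBivariate (f : MvPolynomial (Fin 2) L) (i j : ℕ) :
    ((toBivariate f).coeff j).coeff i = coeffXY f i j := by
  induction f using MvPolynomial.induction_on' with
  | monomial m a =>
    have hm : m = Finsupp.single 0 i + Finsupp.single 1 j ↔ i = m 0 ∧ j = m 1 := by
      simp [Finsupp.ext_iff, Fin.forall_fin_two, eq_comm]
    have hmon : toBivariate (monomial m a) =
        Polynomial.C (Polynomial.C a * Polynomial.X ^ m 0) * Polynomial.X ^ m 1 := by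
      simp [toBivariate, aeval_monomial, Finsupp.prod_fintype, Fin.prod_univ_two, mul_assoc]
    rw [hmon, coeffXY, coeff_monomial, Polynomial.coeff_C_mul_X_pow]
    simp only [hm]
    by_cases hj : j = m 1 <;> simp [hj]
  | add p q hp hq =>
    simp only [toBivariate, coeffXY, map_add, Polynomial.coeff_add, coeff_add] at hp hq ⊢
    rw [hp, hq]

theorem eval₂_toBivariate {A : Type*} [CommRing A] [Algebra R A] {φ : R[X] →+* A}
    (hφ : φ.comp Polynomial.C = algebraMap R A) (y : A) (f : MvPolynomial (Fin 2) R) :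
    (toBivariate f).eval₂ φ y = aeval ![φ Polynomial.X, y] f := by
  induction f using MvPolynomial.induction_on with
  | C a => simpa [toBivariate] using congrArg (· a) hφ
  | add p q hp hq => simpa [toBivariate] using congrArg₂ (· + ·) hp hq
  | mul_X p i hp =>
    rw [toBivariate] at hp
    rw [toBivariate, map_mul, map_mul, Polynomial.eval₂_mul, hp]
    fin_cases i <;> simp

theorem aeval_Fpoly {A : Type*} [CommRing A] [Algebra L A] (x y z w : A)
    (f : MvPolynomial (Fin 2) L) (d : ℕ) :
    aeval ![1, x, y, z, w] (Fpoly f d) =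
      (y - w) ^ 2 + (x - z) * (aeval ![x, y] f - aeval ![z, w] f) := by
  rw [aeval_def ![x, y], aeval_def ![z, w], eval₂_eq' _ ![x, y], eval₂_eq' _ ![z, w],
    ← Finset.sum_sub_distrib]
  simp [Fpoly, Fin.prod_univ_two, mul_sub]

theorem map_Fpoly {K : Type*} [Field K] (φ : K →+* L) (f : MvPolynomial (Fin 2) K) (d : ℕ) :
    map φ (Fpoly f d) = Fpoly (map φ f) d := by
  simp [Fpoly, support_map_of_injective _ φ.injective, coeff_map]

/-- The substitution `X₀ = 1`, `X₁ = x`, `X₂ = y`, `X₃ = z`, `X₄ = w`, used to cut out a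
three-dimensional affine slice of a hypersurface in `PG(4, q)`. It takes values in `R[x][z][y]`:
the innermost variable is `x` and the outermost one is `y`. -/
noncomputable def slice (w : R[X][X][X]) : MvPolynomial (Fin 5) R →ₐ[R] R[X][X][X] :=
  aeval ![1, Polynomial.C (Polynomial.C Polynomial.X), Polynomial.X,
    Polynomial.C Polynomial.X, w]

theorem slice_map {S : Type*} [CommRing S] (φ : R →+* S) (w : R[X][X][X])
    (g : MvPolynomial (Fin 5) R) :
    slice (w.map (Polynomial.mapRingHom (Polynomial.mapRingHom φ))) (map φ g) =
      (slice w g).map (Polynomial.mapRingHom (Polynomial.mapRingHom φ)) := by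
  induction g using MvPolynomial.induction_on with
  | C a => simp [slice]
  | add p q hp hq => simp [hp, hq]
  | mul_X p i hp =>
    simp only [map_mul, Polynomial.map_mul, hp]
    fin_cases i <;> simp [slice]

theorem slice_Fpoly (w : L[X][X][X]) (f : MvPolynomial (Fin 2) L) (d : ℕ) :
    slice w (Fpoly f d) = (Polynomial.X - w) ^ 2 +
      Polynomial.C (Polynomial.C Polynomial.X - Polynomial.X) *
        ((toBivariate f).map Polynomial.C -
          (toBivariate f).eval₂ (Polynomial.C.comp (Polynomial.mapRingHom Polynomial.C)) w) := by
  have hxy := eval₂_toBivariate (A := L[X][X][X]) (φ := Polynomial.C.comp Polynomial.C) rfl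
    Polynomial.X f
  have hzw := eval₂_toBivariate (A := L[X][X][X])
    (φ := Polynomial.C.comp (Polynomial.mapRingHom Polynomial.C))
    (by ext a : 1; simp) w f
  have h := aeval_Fpoly (A := L[X][X][X]) (Polynomial.C (Polynomial.C Polynomial.X)) Polynomial.X
    (Polynomial.C Polynomial.X) w f d
  simp only [RingHom.comp_apply, Polynomial.coe_mapRingHom, Polynomial.map_X] at hxy hzw
  rw [← hxy, ← hzw, ← Polynomial.C_sub] at h
  exact h

theorem slice_zero_Fpoly (f : MvPolynomial (Fin 2) L) (d : ℕ) :
    slice 0 (Fpoly f d) = Polynomial.X ^ 2 +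
      Polynomial.C (Polynomial.C Polynomial.X - Polynomial.X) *
        ((toBivariate f).map Polynomial.C -
          Polynomial.C (((toBivariate f).coeff 0).map Polynomial.C)) := by
  rw [slice_Fpoly, sub_zero (Polynomial.X : L[X][X][X]), Polynomial.eval₂_at_zero]
  rfl

theorem slice_X_Fpoly (f : MvPolynomial (Fin 2) L) (d : ℕ) :
    slice Polynomial.X (Fpoly f d) =
      Polynomial.C (Polynomial.C Polynomial.X - Polynomial.X) *
        ((toBivariate f).map Polynomial.C -
          (toBivariate f).map (Polynomial.mapRingHom Polynomial.C)) := by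
  rw [slice_Fpoly, sub_self (Polynomial.X : L[X][X][X]), zero_pow two_ne_zero, zero_add]
  rfl

theorem degree_leadingCoeff_slice_zero_Fpoly {f : MvPolynomial (Fin 2) L}
    (hf : 2 ≤ (toBivariate f).natDegree) (d : ℕ) :
    (slice 0 (Fpoly f d)).leadingCoeff.degree = 1 := by
  let p := toBivariate f
  let P : L[X][X][X] := p.map Polynomial.C
  have hPdeg : P.natDegree = p.natDegree :=
    Polynomial.natDegree_map_eq_of_injective Polynomial.C_injective p
  have hPlead : P.leadingCoeff = Polynomial.C p.leadingCoeff :=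
    Polynomial.leadingCoeff_map_of_injective Polynomial.C_injective p
  have hp0 : p.leadingCoeff ≠ 0 :=
    Polynomial.leadingCoeff_ne_zero.mpr (Polynomial.ne_zero_of_natDegree_gt hf)
  have hX2 : (Polynomial.X ^ 2 : L[X][X][X]).coeff P.natDegree =
      Polynomial.C ((Polynomial.X ^ 2 : L[X][X]).coeff P.natDegree) := by
    simp only [Polynomial.coeff_X_pow, apply_ite Polynomial.C, Polynomial.C_1, Polynomial.C_0]
  have hlinear : (Polynomial.X ^ 2 : L[X][X][X]).coeff P.natDegree +
      (Polynomial.C Polynomial.X - Polynomial.X) * P.leadingCoeff =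
      Polynomial.C (-p.leadingCoeff) * Polynomial.X +
        Polynomial.C ((Polynomial.X ^ 2 : L[X][X]).coeff P.natDegree +
          Polynomial.X * p.leadingCoeff) := by
    rw [hX2, hPlead]
    simp only [Polynomial.C_add, Polynomial.C_neg, Polynomial.C_mul]
    ring
  have hdeg := Polynomial.degree_linear (b := (Polynomial.X ^ 2 : L[X][X]).coeff P.natDegree +
          Polynomial.X * p.leadingCoeff) (neg_ne_zero.mpr hp0)
  rw [← hlinear] at hdeg
  rw [slice_zero_Fpoly, leadingCoeff_X_sq_add_C_mul_sub_C _ _ (hf.trans hPdeg.ge), hdeg]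
  exact Polynomial.ne_zero_of_degree_gt (n := 0) (by rw [hdeg]; exact zero_lt_one)

theorem degree_slice_X_Fpoly {f : MvPolynomial (Fin 2) L} (hf : (toBivariate f).natDegree ≤ 1)
    (h1 : 0 < ((toBivariate f).coeff 1).natDegree) (d : ℕ) :
    (slice Polynomial.X (Fpoly f d)).degree = 1 := by
  let δ : L[X][X] := Polynomial.C Polynomial.X - Polynomial.X
  have hδ : δ ≠ 0 := by simpa [δ] using C_sub_map_C_ne_zero (p := (Polynomial.X : L[X])) (by simp)
  obtain ⟨b, a, hp⟩ := Polynomial.exists_eq_X_add_C_of_natDegree_le_one hf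
  have hb : 0 < b.natDegree := by simpa [hp] using h1
  have hslice : slice Polynomial.X (Fpoly f d) =
      Polynomial.C (δ * (Polynomial.C b - b.map Polynomial.C)) * Polynomial.X +
        Polynomial.C (δ * (Polynomial.C a - a.map Polynomial.C)) := by
    rw [slice_X_Fpoly, hp]
    simp only [Polynomial.map_add, Polynomial.map_mul, Polynomial.map_C, Polynomial.map_X,
      Polynomial.coe_mapRingHom, Polynomial.C_mul, Polynomial.C_sub, δ]
    ring
  rw [hslice, Polynomial.degree_linear (mul_ne_zero hδ (C_sub_map_C_ne_zero hb))]

theorem irreducible_slice_zero_Fpoly [CharP L 2] {f : MvPolynomial (Fin 2) L}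
    (hf : (toBivariate f).natDegree ≤ 1) (h1 : ((toBivariate f).coeff 1).natDegree = 0)
    (h0 : 2 ≤ ((toBivariate f).coeff 0).natDegree) (d : ℕ) :
    Irreducible (slice 0 (Fpoly f d)) := by
  obtain ⟨b, a, hp⟩ := Polynomial.exists_eq_X_add_C_of_natDegree_le_one hf
  obtain ⟨b, rfl⟩ : ∃ b' : L, b = Polynomial.C b' :=
    ⟨_, Polynomial.eq_C_of_natDegree_eq_zero (by simpa [hp] using h1)⟩
  have ha : 2 ≤ a.natDegree := by simpa [hp] using h0
  have hslice : slice 0 (Fpoly f d) =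
      Polynomial.X ^ 2 + Polynomial.C (Polynomial.C Polynomial.X - Polynomial.X) *
        (Polynomial.C (Polynomial.C (Polynomial.C b)) * Polynomial.X +
          Polynomial.C (Polynomial.C a - a.map Polynomial.C)) := by
    rw [slice_zero_Fpoly, hp]
    simp only [Polynomial.map_add, Polynomial.map_mul, Polynomial.map_C, Polynomial.map_X,
      Polynomial.coeff_add, Polynomial.coeff_C_zero, Polynomial.mul_coeff_zero,
      Polynomial.coeff_X_zero, mul_zero, zero_add, Polynomial.C_sub]
    ring
  rw [hslice]
  exact irreducible_X_sq_add_C_mul ha b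

theorem toBivariate_degree_trichotomy {f : MvPolynomial (Fin 2) L} (hf : 2 ≤ f.totalDegree) :
    2 ≤ (toBivariate f).natDegree ∨ (toBivariate f).natDegree ≤ 1 ∧
      (0 < ((toBivariate f).coeff 1).natDegree ∨ ((toBivariate f).coeff 1).natDegree = 0 ∧
        2 ≤ ((toBivariate f).coeff 0).natDegree) := by
  obtain ⟨m, hm, hdeg⟩ := (Finset.le_sup_iff two_pos).mp hf
  have hcoeff : ((toBivariate f).coeff (m 1)).coeff (m 0) ≠ 0 := by
    rw [coeff_coeff_toBivariate, coeffXY]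
    convert mem_support_iff.mp hm
    ext i
    fin_cases i <;> simp
  have hi : m 0 ≤ ((toBivariate f).coeff (m 1)).natDegree :=
    Polynomial.le_natDegree_of_ne_zero hcoeff
  have hj : m 1 ≤ (toBivariate f).natDegree :=
    Polynomial.le_natDegree_of_ne_zero fun h => hcoeff (by rw [h, Polynomial.coeff_zero])
  have hsum : 2 ≤ m 0 + m 1 := by
    simpa [Finsupp.sum_fintype] using hdeg
  obtain h0 | h1 | h2 : m 1 = 0 ∨ m 1 = 1 ∨ 2 ≤ m 1 := by omega
  · rw [h0] at hi
    omega
  · rw [h1] at hi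
    omega
  · exact .inl (h2.trans hj)

theorem two_le_totalDegree_of_coeffXY_ne_zero {f : MvPolynomial (Fin 2) L}
    (h00 : coeffXY f 0 0 = 0)
    (hex : ∃ i j : ℕ, (i, j) ≠ (1, 0) ∧ (i, j) ≠ (0, 1) ∧ coeffXY f i j ≠ 0) :
    2 ≤ f.totalDegree := by
  obtain ⟨i, j, h10, h01, hij⟩ := hex
  have h00' : (i, j) ≠ (0, 0) := by
    rintro ⟨⟩
    exact hij h00
  have hle := le_totalDegree (mem_support_iff.mpr hij)
  have hsum : i + j ≤ f.totalDegree := by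
    simpa [Finsupp.sum_fintype] using hle
  simp only [ne_eq, Prod.mk.injEq] at h00' h10 h01
  omega

end Slices

section AbsIrrComponent

variable {K : Type*} [Field K]

theorem hasAbsIrrComponent_of_irreducible_image {F : MvPolynomial (Fin 5) K} {M : Type*}
    [CommMonoid M] (ψ : MvPolynomial (Fin 5) (AlgebraicClosure K) →* M)
    (hψ : ∀ (σ : Gal(AlgebraicClosure K/K)) (g : MvPolynomial (Fin 5) (AlgebraicClosure K)),
      IsUnit (ψ (map (σ : AlgebraicClosure K →+* AlgebraicClosure K) g)) → IsUnit (ψ g))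
    (hF : Irreducible (ψ (map (algebraMap K (AlgebraicClosure K)) F))) :
    HasAbsIrrComponent F := by
  obtain ⟨g, hgF, hg⟩ := exists_dvd_irreducible_map_of_irreducible_image ψ hψ hF
  exact ⟨g, hgF, totalDegree_pos_of_irreducible_map _ hg, hg⟩

theorem hasAbsIrrComponent_of_irreducible_slice_image {F : MvPolynomial (Fin 5) K}
    {M : Type*} [CommMonoid M] {w : (AlgebraicClosure K)[X][X][X]}
    (hw : ∀ σ : Gal(AlgebraicClosure K/K), w.map (Polynomial.mapRingHom (Polynomial.mapRingHom
      (σ : AlgebraicClosure K →+* AlgebraicClosure K))) = w)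
    (χ : (AlgebraicClosure K)[X][X][X] →* M)
    (hχ : ∀ (σ : Gal(AlgebraicClosure K/K)) (r : (AlgebraicClosure K)[X][X][X]),
      IsUnit (χ (r.map (Polynomial.mapRingHom (Polynomial.mapRingHom
        (σ : AlgebraicClosure K →+* AlgebraicClosure K))))) → IsUnit (χ r))
    (hF : Irreducible (χ (slice w (map (algebraMap K (AlgebraicClosure K)) F)))) :
    HasAbsIrrComponent F := by
  refine hasAbsIrrComponent_of_irreducible_image (χ.comp (slice w : _ →* _))
    (fun σ g hg => hχ σ _ ?_) hF
  change IsUnit (χ (slice w (map (σ : AlgebraicClosure K →+* AlgebraicClosure K) g))) at hg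
  rwa [← hw σ, slice_map] at hg

theorem hasAbsIrrComponent_of_degree_leadingCoeff_slice_zero {F : MvPolynomial (Fin 5) K}
    (hF : (slice 0 (map (algebraMap K (AlgebraicClosure K)) F)).leadingCoeff.degree = 1) :
    HasAbsIrrComponent F := by
  refine hasAbsIrrComponent_of_irreducible_slice_image (fun σ => Polynomial.map_zero _)
    (Polynomial.degreeMonoidHom.comp Polynomial.leadingCoeffHom) (fun σ r hr => ?_)
    (irreducible_degreeMonoidHom hF)
  have hinj : Function.Injective (Polynomial.mapRingHom
      (σ : AlgebraicClosure K →+* AlgebraicClosure K)) := Polynomial.map_injective _ σ.injective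
  rwa [MonoidHom.comp_apply, Polynomial.leadingCoeffHom_apply,
    Polynomial.leadingCoeff_map_of_injective (Polynomial.map_injective _ hinj),
    Polynomial.coe_mapRingHom, degreeMonoidHom_map_of_injective hinj] at hr

theorem hasAbsIrrComponent_of_degree_slice_X {F : MvPolynomial (Fin 5) K}
    (hF : (slice Polynomial.X (map (algebraMap K (AlgebraicClosure K)) F)).degree = 1) :
    HasAbsIrrComponent F := by
  refine hasAbsIrrComponent_of_irreducible_slice_image (fun σ => Polynomial.map_X _)
    Polynomial.degreeMonoidHom (fun σ r hr => ?_) (irreducible_degreeMonoidHom hF)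
  have hinj : Function.Injective (Polynomial.mapRingHom (Polynomial.mapRingHom
      (σ : AlgebraicClosure K →+* AlgebraicClosure K))) :=
    Polynomial.map_injective _ (Polynomial.map_injective _ σ.injective)
  rwa [degreeMonoidHom_map_of_injective hinj] at hr

theorem hasAbsIrrComponent_of_irreducible_slice_zero {F : MvPolynomial (Fin 5) K}
    (hF : Irreducible (slice 0 (map (algebraMap K (AlgebraicClosure K)) F))) :
    HasAbsIrrComponent F := by
  refine hasAbsIrrComponent_of_irreducible_slice_image (M := (AlgebraicClosure K)[X][X][X])
    (fun σ => Polynomial.map_zero _) (MonoidHom.id _) (fun σ r hr => ?_) hF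
  exact (MulEquiv.isUnit_map (Polynomial.mapEquiv (Polynomial.mapEquiv
    (Polynomial.mapEquiv (σ : AlgebraicClosure K ≃+* AlgebraicClosure K))))).mp hr

theorem statement3_general [CharP K 2] {f : MvPolynomial (Fin 2) K} (hf : 2 ≤ f.totalDegree) :
    HasAbsIrrComponent (Fpoly f f.totalDegree) := by
  have : CharP (AlgebraicClosure K) 2 := charP_of_injective_algebraMap' K 2
  have hmap : 2 ≤ (map (algebraMap K (AlgebraicClosure K)) f).totalDegree := by
    rwa [totalDegree, support_map_of_injective _ (algebraMap K (AlgebraicClosure K)).injective]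
  obtain hn | ⟨hn, h1 | ⟨h1, h0⟩⟩ := toBivariate_degree_trichotomy hmap
  · apply hasAbsIrrComponent_of_degree_leadingCoeff_slice_zero
    rw [map_Fpoly, degree_leadingCoeff_slice_zero_Fpoly hn]
  · apply hasAbsIrrComponent_of_degree_slice_X
    rw [map_Fpoly, degree_slice_X_Fpoly hn h1]
  · apply hasAbsIrrComponent_of_irreducible_slice_zero
    rw [map_Fpoly]
    exact irreducible_slice_zero_Fpoly hn h1 h0 _

end AbsIrrComponent

/-- Characteristic two: if some coefficient `a_{i,j}` with `(i,j) ∉ {(1,0),(0,1)}` is nonzero,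
then `S_f` contains an absolutely irreducible component defined over `F_q = F_{2^h}`. -/
theorem statement3 (h q : ℕ) (hh : 0 < h) (hq : q = 2 ^ h)
    (K : Type*) [Field K] [Fintype K] (hcard : Fintype.card K = q)
    (f : MvPolynomial (Fin 2) K) (d : ℕ) (hdeg : f.totalDegree = d) (hd : 1 ≤ d)
    (h00 : coeffXY f 0 0 = 0)
    (hex : ∃ i j : ℕ, (i, j) ≠ (1, 0) ∧ (i, j) ≠ (0, 1) ∧ coeffXY f i j ≠ 0) :
    HasAbsIrrComponent (Fpoly f d) := by
  have hp : Fact (Nat.Prime 2) := ⟨Nat.prime_two⟩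
  have : CharP K 2 := charP_of_card_eq_prime_pow (hcard.trans hq)
  exact hdeg ▸ statement3_general (two_le_totalDegree_of_coeffXY_ne_zero h00 hex)
end
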